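/- arXiv:1805.09689 — 2 statements merged into one kernel-verified Lean document; each statement's English description precedes it below -/
import Mathlib

section
/- The thickness of the complete tripartite graph K_{1,6,6} equals 2. -/
open SimpleGraph

/-- A simple graph is planar if it admits a drawing in the plane: an injective
placement of vertices and, for each edge, an injective continuous arc joining
the images of its endpoints, such that arcs avoid vertex images in their
interiors and distinct arcs meet only at vertex images. -/
def IsPlanar {V : Type*} (G : SimpleGraph V) : Prop :=
  ∃ (f : V → ℝ × ℝ) (γ : G.edgeSet → (Set.Icc (0:ℝ) 1 → ℝ × ℝ)),
    Function.Injective f ∧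
    (∀ e : G.edgeSet, Continuous (γ e)) ∧
    (∀ e : G.edgeSet, ∃ u v : V, (e : Sym2 V) = s(u, v) ∧
      γ e ⟨0, by norm_num⟩ = f u ∧ γ e ⟨1, by norm_num⟩ = f v) ∧
    (∀ e : G.edgeSet, Function.Injective (γ e)) ∧
    (∀ e : G.edgeSet, ∀ t : Set.Icc (0:ℝ) 1, (t : ℝ) ≠ 0 → (t : ℝ) ≠ 1 →
      ∀ v : V, γ e t ≠ f v) ∧
    (∀ e e' : G.edgeSet, e ≠ e' → ∀ s t : Set.Icc (0:ℝ) 1,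
      γ e s = γ e' t → γ e s ∈ Set.range f)

/-- The thickness of a graph: the least `n` such that `G` is the union of `n`
planar subgraphs. -/
noncomputable def thickness {V : Type*} (G : SimpleGraph V) : ℕ :=
  sInf {n : ℕ | ∃ H : Fin n → SimpleGraph V,
    (∀ i, H i ≤ G) ∧ (∀ i, IsPlanar (H i)) ∧ (⨆ i, H i) = G}

open Set unitInterval Function

/-!
`K_{1,6,6}` is not planar because it contains `K_{3,3}`, and it splits into two complementary
graphs that have straight-line drawings with integer vertices.

A drawing of `K_{3,3}` consists of three tripods, each joining the feet `a 0`, `a 1`, `a 2` to a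
center. Every arm of a tripod has an angle swept around each foot it does not start from; the
alternating sum of these angles, the turning of the tripod, is an odd multiple of `π`. If two
tripods with the same feet do not cross, then `δ t - γ s` does not vanish for arms `γ`, `δ` at
different feet, so its angle does not change around the square `(s, t) ∈ [0, 1]²`; summing over
such pairs of arms shows that the two turnings cancel. Three pairwise opposite turnings vanish,
which is a contradiction.
-/

section Planarity

variable {V : Type*} {G H : SimpleGraph V}

theorem IsPlanar.mono (hH : IsPlanar H) (hGH : G ≤ H) : IsPlanar G := by
  obtain ⟨f, γ, hf, hcont, hends, hinj, havoid, hmeet⟩ := hH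
  let ι : G.edgeSet → H.edgeSet := inclusion (edgeSet_subset_edgeSet.2 hGH)
  exact ⟨f, γ ∘ ι, hf, fun e => hcont (ι e), fun e => hends (ι e), fun e => hinj (ι e),
    fun e => havoid (ι e), fun e e' hne =>
      hmeet (ι e) (ι e') ((inclusion_injective _).ne hne)⟩

theorem thickness_eq_two (hG : ¬ IsPlanar G) (hle : H ≤ G) (hH : IsPlanar H)
    (hcompl : IsPlanar (G \ H)) : thickness G = 2 := by
  have decomposition : ∃ K : Fin 2 → SimpleGraph V,
      (∀ i, K i ≤ G) ∧ (∀ i, IsPlanar (K i)) ∧ (⨆ i, K i) = G := by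
    refine ⟨![H, G \ H], by simp [Fin.forall_fin_two, hle],
      by simp [Fin.forall_fin_two, hH, hcompl], le_antisymm (by simp [Fin.forall_fin_two, hle]) ?_⟩
    rw [← sup_sdiff_cancel_right hle]
    exact sup_le (le_iSup_of_le 0 (by simp)) (le_iSup_of_le 1 (by simp))
  refine (Nat.sInf_le decomposition).antisymm (le_csInf ⟨2, decomposition⟩ ?_)
  rintro n ⟨K, -, hK, hKG⟩
  by_contra! hn
  interval_cases n
  · rw [iSup_of_empty] at hKG
    exact hG (hH.mono (hKG ▸ bot_le))
  · rw [iSup_unique] at hKG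
    exact hG (hKG ▸ hK default)

theorem IsPlanar.exists_disjoint_paths (hG : IsPlanar G) :
    ∃ (f : V → ℝ × ℝ) (γ : ∀ u v, G.Adj u v → Path (f u) (f v)),
      ∀ u v w x (h : G.Adj u v) (h' : G.Adj w x), u ≠ w → u ≠ x → v ≠ w → v ≠ x →
        Disjoint (range (γ u v h)) (range (γ w x h')) := by
  obtain ⟨f, γ, hf, hcont, hends, -, havoid, hmeet⟩ := hG
  have mem_of_arc_eq (e : G.edgeSet) (s : I) (v : V) (h : γ e s = f v) : v ∈ (e : Sym2 V) := by
    obtain ⟨a, b, he, ha, hb⟩ := hends e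
    rw [he, Sym2.mem_iff]
    by_cases h0 : (s : ℝ) = 0
    · left
      rw [← hf.eq_iff, ← h, ← ha]
      exact congrArg (γ e) (Subtype.ext h0)
    by_cases h1 : (s : ℝ) = 1
    · right
      rw [← hf.eq_iff, ← h, ← hb]
      exact congrArg (γ e) (Subtype.ext h1)
    exact absurd h (havoid e s h0 h1 v)
  have exists_path (u v : V) (h : G.Adj u v) :
      ∃ p : Path (f u) (f v), range p = range (γ ⟨s(u, v), h⟩) := by
    obtain ⟨a, b, he, ha, hb⟩ := hends ⟨s(u, v), h⟩
    obtain ⟨arc, harc⟩ : ∃ p : Path (f a) (f b), range p = range (γ ⟨s(u, v), h⟩) :=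
      ⟨⟨⟨γ _, hcont _⟩, ha, hb⟩, rfl⟩
    obtain ⟨rfl, rfl⟩ | ⟨rfl, rfl⟩ := Sym2.eq_iff.1 he
    · exact ⟨arc, harc⟩
    · exact ⟨arc.symm, arc.symm_range.trans harc⟩
  choose p hp using exists_path
  refine ⟨f, p, fun u v w x h h' huw hux hvw hvx => ?_⟩
  rw [hp, hp, Set.disjoint_left]
  rintro _ ⟨s, rfl⟩ ⟨t, ht⟩
  have hne : (⟨s(u, v), h⟩ : G.edgeSet) ≠ ⟨s(w, x), h'⟩ := by
    grind
  obtain ⟨z, hz⟩ := hmeet _ _ hne s t ht.symm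
  have hz₁ := mem_of_arc_eq _ s z hz.symm
  have hz₂ := mem_of_arc_eq _ t z (ht.trans hz.symm)
  simp only [Sym2.mem_iff] at hz₁ hz₂
  grind

end Planarity

section LogIncrement

theorem exists_continuous_exp_eq {X : Type*} [TopologicalSpace X] [SimplyConnectedSpace X]
    [LocallyPathConnectedSpace X] {g : X → ℂ} (hg : Continuous g) (hg0 : ∀ x, g x ≠ 0) :
    ∃ L : X → ℂ, Continuous L ∧ ∀ x, Complex.exp (L x) = g x := by
  obtain ⟨x₀⟩ := (inferInstance : Nonempty X)
  obtain ⟨L, ⟨-, hL⟩, -⟩ := Complex.isCoveringMapOn_exp.existsUnique_continuousMap_lifts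
    (⟨g, hg⟩ : C(X, ℂ)) (a₀ := x₀) (Complex.exp_log (hg0 x₀)) hg0
  exact ⟨L, L.continuous, congrFun hL⟩

theorem sub_eq_sub_of_exp_eq {X : Type*} [TopologicalSpace X] [PreconnectedSpace X] {L M : X → ℂ}
    (hL : Continuous L) (hM : Continuous M) (h : ∀ x, Complex.exp (L x) = Complex.exp (M x))
    (x y : X) : L y - L x = M y - M x := by
  have heq : L = fun z => M z + (L x - M x) := by
    refine Complex.isCoveringMap_exp.eq_of_comp_eq hL (by fun_prop) (funext fun z => ?_) x (by simp)
    refine Subtype.ext ?_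
    simp [Complex.exp_add, Complex.exp_sub, h]
  linear_combination congrFun heq y

/-- The change of a continuous logarithm along the path `γ`, whose imaginary part is the angle swept
around `0`; a junk value if `γ` is discontinuous or vanishes somewhere. -/
noncomputable def logIncrement (γ : I → ℂ) : ℂ :=
  let L := Classical.epsilon fun L : I → ℂ => Continuous L ∧ ∀ t, Complex.exp (L t) = γ t
  L 1 - L 0

theorem logIncrement_eq {γ L : I → ℂ} (hL : Continuous L) (h : ∀ t, Complex.exp (L t) = γ t) :
    logIncrement γ = L 1 - L 0 := by
  obtain ⟨hM, h'⟩ := Classical.epsilon_spec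
    (p := fun L : I → ℂ => Continuous L ∧ ∀ t, Complex.exp (L t) = γ t) ⟨L, hL, h⟩
  exact sub_eq_sub_of_exp_eq hM hL (fun t => (h' t).trans (h t).symm) 0 1

instance : ContractibleSpace I := (convex_Icc 0 1).contractibleSpace ⟨0, by simp⟩

instance : LocallyPathConnectedSpace I := (convex_Icc 0 1).locallyPathConnectedSpace

theorem exp_logIncrement {γ : I → ℂ} (hγ : Continuous γ) (hγ0 : ∀ t, γ t ≠ 0) :
    Complex.exp (logIncrement γ) = γ 1 / γ 0 := by
  obtain ⟨L, hL, h⟩ := exists_continuous_exp_eq hγ hγ0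
  rw [logIncrement_eq hL h, Complex.exp_sub, h, h]

theorem logIncrement_neg {γ : I → ℂ} (hγ : Continuous γ) (hγ0 : ∀ t, γ t ≠ 0) :
    logIncrement (-γ) = logIncrement γ := by
  obtain ⟨L, hL, h⟩ := exists_continuous_exp_eq hγ hγ0
  have h' (t : I) : Complex.exp (L t + Real.pi * Complex.I) = (-γ) t := by
    simp [Complex.exp_add, h]
  rw [logIncrement_eq hL h, logIncrement_eq (by fun_prop) h']
  ring

theorem logIncrement_boundary_square {F : I × I → ℂ} (hF : Continuous F) (hF0 : ∀ x, F x ≠ 0) :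
    logIncrement (fun t => F (0, t)) + logIncrement (fun s => F (s, 1)) =
      logIncrement (fun s => F (s, 0)) + logIncrement (fun t => F (1, t)) := by
  obtain ⟨L, hL, h⟩ := exists_continuous_exp_eq hF hF0
  rw [logIncrement_eq (L := fun t => L (0, t)) (by fun_prop) fun t => h (0, t),
    logIncrement_eq (L := fun s => L (s, 1)) (by fun_prop) fun s => h (s, 1),
    logIncrement_eq (L := fun s => L (s, 0)) (by fun_prop) fun s => h (s, 0),
    logIncrement_eq (L := fun t => L (1, t)) (by fun_prop) fun t => h (1, t)]
  ring

theorem logIncrement_of_disjoint_paths {a b c d : ℂ} (γ : Path a b) (δ : Path c d)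
    (h : ∀ s t, γ s ≠ δ t) :
    logIncrement (fun t => δ t - a) - logIncrement (fun s => γ s - c) =
      logIncrement (fun t => δ t - b) - logIncrement (fun s => γ s - d) := by
  have square := logIncrement_boundary_square (F := fun x : I × I => δ x.2 - γ x.1)
    (by fun_prop) fun x => sub_ne_zero.2 (h _ _).symm
  have hc := logIncrement_neg (γ := fun s => γ s - c) (by fun_prop)
    fun s => sub_ne_zero.2 (δ.source ▸ h s 0)
  have hd := logIncrement_neg (γ := fun s => γ s - d) (by fun_prop)
    fun s => sub_ne_zero.2 (δ.target ▸ h s 1)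
  simp only [Pi.neg_def, neg_sub] at hc hd
  simp only [Path.source, Path.target, hc, hd] at square
  linear_combination square

end LogIncrement

section Tripod

variable {a : Fin 3 → ℂ}

/-- The turning of the tripod with feet `a i`, center `b` and arms `γ i`, in logarithmic form:
around each foot, the logarithmic increment along the next arm minus that along the previous one.
For a tripod without crossings it is `±πi`, the sign giving the cyclic order of the arms at `b`. -/
noncomputable def tripodTurning {b : ℂ} (γ : ∀ i, Path (a i) b) : ℂ :=
  ∑ i, (logIncrement (fun t => γ (i + 1) t - a i) - logIncrement (fun t => γ (i + 2) t - a i))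

theorem exp_tripodTurning {b : ℂ} (γ : ∀ i, Path (a i) b)
    (hγ : ∀ i j, i ≠ j → ∀ t, γ j t ≠ a i) :
    Complex.exp (tripodTurning γ) = -1 := by
  have exp_increment (i j : Fin 3) (hij : i ≠ j) :
      Complex.exp (logIncrement fun t => γ j t - a i) = (b - a i) / (a j - a i) := by
    rw [exp_logIncrement (by fun_prop) fun t => sub_ne_zero.2 (hγ i j hij t)]
    simp
  have center_ne (i : Fin 3) : b - a i ≠ 0 :=
    sub_ne_zero.2 ((γ (i + 1)).target ▸ hγ i (i + 1) (by simp) 1)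
  have feet_ne (i j : Fin 3) (hij : i ≠ j) : a j - a i ≠ 0 :=
    sub_ne_zero.2 ((γ j).source ▸ hγ i j hij 0)
  have reversed_edges : ∏ i, (a (i + 2) - a i) = -∏ i, (a (i + 1) - a i) := by
    simp only [Fin.prod_univ_three, Fin.isValue, zero_add, Fin.reduceAdd]
    ring
  calc Complex.exp (tripodTurning γ)
      = ∏ i, ((b - a i) / (a (i + 1) - a i)) / ((b - a i) / (a (i + 2) - a i)) := by
        simp only [tripodTurning, Complex.exp_sum, Complex.exp_sub]
        exact Finset.prod_congr rfl fun i _ => by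
          rw [exp_increment _ _ (by simp), exp_increment _ _ (by simp)]
    _ = ∏ i, (a (i + 2) - a i) / (a (i + 1) - a i) :=
        Finset.prod_congr rfl fun i _ => div_div_div_cancel_left' _ _ (center_ne i)
    _ = -1 := by
        rw [Finset.prod_div_distrib, reversed_edges, neg_div, div_self]
        exact Finset.prod_ne_zero_iff.2 fun i _ => feet_ne i (i + 1) (by simp)

theorem tripodTurning_add_eq_zero {b c : ℂ} (γ : ∀ i, Path (a i) b) (δ : ∀ i, Path (a i) c)
    (h : ∀ i k, i ≠ k → ∀ s t, γ i s ≠ δ k t) : tripodTurning γ + tripodTurning δ = 0 := by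
  have arms (i k : Fin 3) (hik : i ≠ k) := logIncrement_of_disjoint_paths (γ i) (δ k) (h i k hik)
  simp only [tripodTurning, Fin.sum_univ_three, Fin.isValue, Fin.reduceAdd]
  linear_combination arms 0 1 (by decide) + arms 1 2 (by decide) + arms 2 0 (by decide)
    - arms 1 0 (by decide) - arms 2 1 (by decide) - arms 0 2 (by decide)

theorem exists_independent_paths_meet {b : Fin 3 → ℂ} (γ : ∀ i j, Path (a i) (b j)) :
    ∃ i k j l, i ≠ k ∧ j ≠ l ∧ ∃ s t, γ i j s = γ k l t := by
  by_contra! hdisj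
  let τ (j : Fin 3) : ℂ := tripodTurning fun i => γ i j
  have opposite (j l : Fin 3) (hjl : j ≠ l) : τ j + τ l = 0 :=
    tripodTurning_add_eq_zero _ _ fun i k hik => hdisj i k j l hik hjl
  have turning_zero : τ 0 = 0 := by
    linear_combination (opposite 0 1 (by decide) + opposite 0 2 (by decide)
      - opposite 1 2 (by decide)) / 2
  have avoid_feet (i k : Fin 3) (hik : i ≠ k) (t : I) : γ k 0 t ≠ a i := by
    simpa using hdisj k i 0 1 hik.symm (by decide) t 0
  have exp_turning : Complex.exp (τ 0) = -1 := exp_tripodTurning _ avoid_feet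
  norm_num [turning_zero] at exp_turning

end Tripod

section CompleteBipartite

variable {V : Type*} {G : SimpleGraph V}

theorem IsPlanar.completeBipartiteGraph_three_three_free (hG : IsPlanar G) :
    (completeBipartiteGraph (Fin 3) (Fin 3)).Free G := by
  rintro ⟨φ⟩
  obtain ⟨f, γ, hγ⟩ := hG.exists_disjoint_paths
  have adj (i j : Fin 3) : G.Adj (φ (.inl i)) (φ (.inr j)) := φ.toHom.map_adj (by simp)
  obtain ⟨i, k, j, l, hik, hjl, s, t, hst⟩ := exists_independent_paths_meet fun i j =>
    (γ _ _ (adj i j)).map Complex.equivRealProdCLM.symm.continuous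
  refine disjoint_range_iff.1 (hγ _ _ _ _ (adj i j) (adj k l) ?_ ?_ ?_ ?_) s t
    (Complex.equivRealProdCLM.symm.injective hst)
  all_goals exact φ.injective.ne (by simp [hik, hjl])

theorem completeBipartiteGraph_isContained_completeMultipartiteGraph {ι α β : Type*}
    {W : ι → Type*} {i j : ι} (hij : i ≠ j) (f : α ↪ W i) (g : β ↪ W j) :
    completeBipartiteGraph α β ⊑ completeMultipartiteGraph W := by
  refine ⟨⟨⟨Sum.elim (fun x => ⟨i, f x⟩) fun y => ⟨j, g y⟩, ?_⟩, ?_⟩⟩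
  · rintro (x | x) (y | y) <;> simp [hij, hij.symm]
  · rintro (x | x) (y | y) <;> simp [hij, hij.symm]

end CompleteBipartite

section Segments

theorem segment_inter_segment_subset {𝕜 E : Type*} [Field 𝕜] [LinearOrder 𝕜]
    [IsStrictOrderedRing 𝕜] [AddCommGroup E] [Module 𝕜 E] {a b c : E}
    (hb : b ∉ segment 𝕜 a c) (hc : c ∉ segment 𝕜 a b) :
    segment 𝕜 a b ∩ segment 𝕜 a c ⊆ {a} := by
  rintro p ⟨hpb, hpc⟩
  by_contra hpa
  have same_direction : SameRay 𝕜 (b -ᵥ a) (c -ᵥ a) :=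
    (mem_segment_iff_wbtw.1 hpb).sameRay_vsub_left.symm.trans
      (mem_segment_iff_wbtw.1 hpc).sameRay_vsub_left
      fun h => absurd (sub_eq_zero.1 h) hpa
  obtain h | h := wbtw_total_of_sameRay_vsub_left same_direction
  · exact hb h.mem_segment
  · exact hc h.mem_segment

variable {V : Type*} {G : SimpleGraph V}

theorem segment_inter_segment_subset_range {f : V → ℝ × ℝ}
    (hvertex : ∀ u v, G.Adj u v → ∀ w, w ≠ u → w ≠ v → f w ∉ segment ℝ (f u) (f v))
    (hedge : ∀ u v, G.Adj u v → ∀ w x, G.Adj w x → u ≠ w → u ≠ x → v ≠ w → v ≠ x →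
      Disjoint (segment ℝ (f u) (f v)) (segment ℝ (f w) (f x)))
    {u v w x : V} (huv : G.Adj u v) (hwx : G.Adj w x) (hne : s(u, v) ≠ s(w, x)) :
    segment ℝ (f u) (f v) ∩ segment ℝ (f w) (f x) ⊆ range f := by
  have adjacent_edges (u v w : V) (huv : G.Adj u v) (huw : G.Adj u w) (hvw : v ≠ w) :
      segment ℝ (f u) (f v) ∩ segment ℝ (f u) (f w) ⊆ range f :=
    (segment_inter_segment_subset (hvertex u w huw v huv.ne' hvw)
      (hvertex u v huv w huw.ne' hvw.symm)).trans (by simp)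
  rcases eq_or_ne u w with rfl | huw
  · exact adjacent_edges u v x huv hwx (by grind)
  rcases eq_or_ne u x with rfl | hux
  · rw [segment_symm ℝ (f w)]
    exact adjacent_edges u v w huv hwx.symm (by grind)
  rcases eq_or_ne v w with rfl | hvw
  · rw [segment_symm ℝ (f u)]
    exact adjacent_edges v u x huv.symm hwx (by grind)
  rcases eq_or_ne v x with rfl | hvx
  · rw [segment_symm ℝ (f u), segment_symm ℝ (f w)]
    exact adjacent_edges v u w huv.symm hwx.symm (by grind)
  · simp [(hedge u v huv w x hwx huw hux hvw hvx).inter_eq]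

theorem IsPlanar.of_segments {f : V → ℝ × ℝ} (hf : Injective f)
    (hvertex : ∀ u v, G.Adj u v → ∀ w, w ≠ u → w ≠ v → f w ∉ segment ℝ (f u) (f v))
    (hedge : ∀ u v, G.Adj u v → ∀ w x, G.Adj w x → u ≠ w → u ≠ x → v ≠ w → v ≠ x →
      Disjoint (segment ℝ (f u) (f v)) (segment ℝ (f w) (f x))) : IsPlanar G := by
  have endpoints (e : G.edgeSet) : ∃ u v : V, (e : Sym2 V) = s(u, v) ∧ G.Adj u v := by
    obtain ⟨⟨u, v⟩, h⟩ := e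
    exact ⟨u, v, rfl, h⟩
  choose a b hab hadj using endpoints
  let γ (e : G.edgeSet) (t : I) : ℝ × ℝ := AffineMap.lineMap (f (a e)) (f (b e)) (t : ℝ)
  have hγ (e : G.edgeSet) : Injective (γ e) :=
    (AffineMap.lineMap_injective ℝ (hf.ne (hadj e).ne)).comp Subtype.val_injective
  have mem_segment (e : G.edgeSet) (t : I) : γ e t ∈ segment ℝ (f (a e)) (f (b e)) := by
    rw [segment_eq_image_lineMap]
    exact ⟨t, t.2, rfl⟩
  have γ_zero (e : G.edgeSet) : γ e 0 = f (a e) := by simp [γ]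
  have γ_one (e : G.edgeSet) : γ e 1 = f (b e) := by simp [γ]
  refine ⟨f, γ, hf, fun e => AffineMap.lineMap_continuous.comp continuous_subtype_val,
    fun e => ⟨a e, b e, hab e, γ_zero e, γ_one e⟩, hγ, fun e t h0 h1 v hv => ?_,
    fun e e' hne s t hst => ?_⟩
  · refine hvertex (a e) (b e) (hadj e) v ?_ ?_ (hv ▸ mem_segment e t)
    · rintro rfl
      exact h0 (congrArg Subtype.val (hγ e (hv.trans (γ_zero e).symm)))
    · rintro rfl
      exact h1 (congrArg Subtype.val (hγ e (hv.trans (γ_one e).symm)))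
  · refine segment_inter_segment_subset_range hvertex hedge (hadj e) (hadj e') ?_
      ⟨mem_segment e s, hst ▸ mem_segment e' t⟩
    rw [← hab, ← hab]
    exact Subtype.val_injective.ne hne

end Segments

section SignedArea

variable {R : Type*} [CommRing R]

/-- Twice the signed area of the triangle `abc`, whose sign tells on which side of the line `ab`
the point `c` lies. -/
def signedArea (a b c : R × R) : R :=
  (b.1 - a.1) * (c.2 - a.2) - (b.2 - a.2) * (c.1 - a.1)

theorem signedArea_map {S : Type*} [CommRing S] (φ : R →+* S) (a b c : R × R) :
    signedArea (Prod.map φ φ a) (Prod.map φ φ b) (Prod.map φ φ c) = φ (signedArea a b c) := by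
  simp [signedArea]

theorem signedArea_self_left (a b : R × R) : signedArea a b a = 0 := by
  simp [signedArea]

theorem signedArea_self_right (a b : R × R) : signedArea a b b = 0 := by
  simp [signedArea, mul_comm]

theorem signedArea_smul_add_smul (a b c d : R × R) {s t : R}
    (hst : s + t = 1) :
    signedArea a b (s • c + t • d) = s * signedArea a b c + t * signedArea a b d := by
  obtain rfl : s = 1 - t := by linear_combination hst
  simp only [signedArea, Prod.fst_add, Prod.snd_add, Prod.smul_fst, Prod.smul_snd, smul_eq_mul]
  ring

theorem signedArea_eq_zero_of_mem_segment [PartialOrder R] {a b p : R × R}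
    (hp : p ∈ segment R a b) : signedArea a b p = 0 := by
  obtain ⟨s, t, -, -, hst, rfl⟩ := hp
  simp [signedArea_smul_add_smul _ _ _ _ hst, signedArea_self_left, signedArea_self_right]

theorem disjoint_segment_of_signedArea_mul_pos [LinearOrder R] [IsStrictOrderedRing R]
    {a b c d : R × R} (h : 0 < signedArea a b c * signedArea a b d) :
    Disjoint (segment R a b) (segment R c d) := by
  rw [Set.disjoint_left]
  rintro _ hp ⟨s, t, hs, ht, hst, rfl⟩
  have combination_zero : s * signedArea a b c + t * signedArea a b d = 0 := by
    rw [← signedArea_smul_add_smul _ _ _ _ hst, signedArea_eq_zero_of_mem_segment hp]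
  have weighted_sum_zero :
      s * signedArea a b c ^ 2 + t * (signedArea a b c * signedArea a b d) = 0 := by
    linear_combination signedArea a b c * combination_zero
  have hc : 0 < signedArea a b c ^ 2 := sq_pos_of_ne_zero (left_ne_zero_of_mul h.ne')
  obtain ⟨hs0, ht0⟩ := (add_eq_zero_iff_of_nonneg (by positivity) (by positivity)).1
    weighted_sum_zero
  obtain rfl : s = 0 := (mul_eq_zero.1 hs0).resolve_right hc.ne'
  obtain rfl : t = 0 := (mul_eq_zero.1 ht0).resolve_right h.ne'
  simp at hst

theorem IsPlanar.of_signedArea {V : Type*} {G : SimpleGraph V} {p : V → ℤ × ℤ} (hp : Injective p)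
    (hvertex : ∀ u v, G.Adj u v → ∀ w, w ≠ u → w ≠ v → signedArea (p u) (p v) (p w) ≠ 0)
    (hedge : ∀ u v, G.Adj u v → ∀ w x, G.Adj w x → u ≠ w → u ≠ x → v ≠ w → v ≠ x →
      0 < signedArea (p u) (p v) (p w) * signedArea (p u) (p v) (p x) ∨
      0 < signedArea (p w) (p x) (p u) * signedArea (p w) (p x) (p v)) : IsPlanar G := by
  let f (v : V) : ℝ × ℝ := Prod.map (Int.castRingHom ℝ) (Int.castRingHom ℝ) (p v)
  have area (u v w : V) : signedArea (f u) (f v) (f w) = (signedArea (p u) (p v) (p w) : ℤ) :=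
    signedArea_map _ _ _ _
  refine .of_segments (f := f) ((Int.cast_injective.prodMap Int.cast_injective).comp hp)
    (fun u v huv w hwu hwv hw => ?_) fun u v huv w x hwx huw hux hvw hvx => ?_
  · have := signedArea_eq_zero_of_mem_segment hw
    rw [area] at this
    exact hvertex u v huv w hwu hwv (mod_cast this)
  · obtain h | h := hedge u v huv w x hwx huw hux hvw hvx
    · refine disjoint_segment_of_signedArea_mul_pos ?_
      simp only [area]
      exact_mod_cast h
    · refine (disjoint_segment_of_signedArea_mul_pos ?_).symm
      simp only [area]
      exact_mod_cast h

end SignedArea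

section Layers

instance : ∀ i, Fintype (![Fin 1, Fin 6, Fin 6] i)
  | 0 => inferInstanceAs (Fintype (Fin 1))
  | 1 => inferInstanceAs (Fintype (Fin 6))
  | 2 => inferInstanceAs (Fintype (Fin 6))

instance : ∀ i, DecidableEq (![Fin 1, Fin 6, Fin 6] i)
  | 0 => inferInstanceAs (DecidableEq (Fin 1))
  | 1 => inferInstanceAs (DecidableEq (Fin 6))
  | 2 => inferInstanceAs (DecidableEq (Fin 6))

/-- The edges of `firstLayer`, oriented from lower to higher parts and given by the adjacency blocks
between the parts. The blocks are chosen so that the graph and its complement in `K_{1,6,6}` are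
both planar. -/
def FirstLayerEdge : (Σ i, ![Fin 1, Fin 6, Fin 6] i) → (Σ i, ![Fin 1, Fin 6, Fin 6] i) → Prop
  | ⟨0, _⟩, ⟨1, i⟩ => (![1, 0, 1, 1, 0, 1] : Fin 6 → ℕ) i = 1
  | ⟨0, _⟩, ⟨2, _⟩ => True
  | ⟨1, i⟩, ⟨2, j⟩ =>
    (!![1, 1, 0, 0, 0, 0;
        1, 1, 0, 0, 0, 0;
        1, 1, 1, 1, 0, 0;
        0, 0, 1, 1, 1, 1;
        0, 0, 0, 0, 1, 1;
        0, 0, 0, 0, 1, 1] : Matrix (Fin 6) (Fin 6) ℕ) i j = 1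
  | _, _ => False

instance : DecidableRel FirstLayerEdge := fun _ _ => by
  unfold FirstLayerEdge
  split <;> infer_instance

/-- One of the two planar layers into which `K_{1,6,6}` is decomposed; the other one is its
complement in `K_{1,6,6}`. -/
def firstLayer : SimpleGraph (Σ i, ![Fin 1, Fin 6, Fin 6] i) :=
  .fromRel FirstLayerEdge

instance : DecidableRel firstLayer.Adj := fun u v =>
  decidable_of_iff' _ (fromRel_adj FirstLayerEdge u v)

/-- Vertex positions of a straight-line drawing of `firstLayer`. -/
def firstLayerPosition : (Σ i, ![Fin 1, Fin 6, Fin 6] i) → ℤ × ℤ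
  | ⟨0, _⟩ => (9, 9)
  | ⟨1, i⟩ => (![(6, 3), (6, 2), (3, 1), (2, 4), (3, 7), (4, 7)] : Fin 6 → ℤ × ℤ) i
  | ⟨2, j⟩ => (![(4, 2), (7, 0), (8, 8), (0, 9), (1, 8), (2, 6)] : Fin 6 → ℤ × ℤ) j

/-- Vertex positions of a straight-line drawing of the complement of `firstLayer` in
`K_{1,6,6}`. -/
def secondLayerPosition : (Σ i, ![Fin 1, Fin 6, Fin 6] i) → ℤ × ℤ
  | ⟨0, _⟩ => (0, 1)
  | ⟨1, i⟩ => (![(-5, 0), (-1, 0), (-2, 0), (2, 0), (1, 0), (5, 0)] : Fin 6 → ℤ × ℤ) i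
  | ⟨2, j⟩ => (![(3, 1), (3, -1), (0, 3), (0, -3), (-3, 1), (-3, -1)] : Fin 6 → ℤ × ℤ) j

theorem firstLayer_le : firstLayer ≤ completeMultipartiteGraph ![Fin 1, Fin 6, Fin 6] :=
  fun u v => (by decide +kernel : ∀ u v, firstLayer.Adj u v →
    (completeMultipartiteGraph ![Fin 1, Fin 6, Fin 6]).Adj u v) u v

theorem isPlanar_firstLayer : IsPlanar firstLayer :=
  .of_signedArea (p := firstLayerPosition) (by decide +kernel) (by decide +kernel)
    (by decide +kernel)

theorem isPlanar_secondLayer :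
    IsPlanar (completeMultipartiteGraph ![Fin 1, Fin 6, Fin 6] \ firstLayer) :=
  .of_signedArea (p := secondLayerPosition) (by decide +kernel) (by decide +kernel)
    (by decide +kernel)

end Layers

theorem thickness_K166 :
    thickness (completeMultipartiteGraph ![Fin 1, Fin 6, Fin 6]) = 2 := by
  refine thickness_eq_two (fun hplanar => ?_) firstLayer_le isPlanar_firstLayer isPlanar_secondLayer
  exact hplanar.completeBipartiteGraph_three_three_free
    (completeBipartiteGraph_isContained_completeMultipartiteGraph (i := 1) (j := 2) (by decide)
      (Fin.castLEEmb (by decide : 3 ≤ 6)) (Fin.castLEEmb (by decide : 3 ≤ 6)))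
end

section
/- The thickness of the complete tripartite graph K_{1,10,10} equals 3. -/
open SimpleGraph

/-!
A planar graph has no `K₅` minor, whereas, by a theorem of Mader, a graph on `n ≥ 3` vertices with
more than `3 * n - 6` edges has one: it keeps too many edges when a vertex of degree at most 3 is
deleted or an edge whose ends have at most two common neighbours is contracted, and if neither is
possible then there is a `K₅` minor around a vertex of degree 4 or 5. So two planar graphs on 21
vertices have at most 114 of the 120 edges of `K_{1,10,10}`; three planar graphs are given by
explicit straight-line drawings.

A `K₅` minor in a plane graph yields five points joined by paths `γ i j`, such that any two of these
paths with no common index are disjoint. Changes of continuous logarithms of `γ i j - p k` along the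
paths assign to each triangle an odd multiple of `π * I`. Disjointness makes the alternating sum of
these over the faces of a tetrahedron an odd multiple of `2 * π * I`, but the alternating sum of the
latter over the five tetrahedra in `K₅` cancels.
-/

section Minors

variable {V V' W : Type*} {G : SimpleGraph V} {H : SimpleGraph W}

/-- `H` is a minor of `G`, witnessed by disjoint connected branch sets `B w` in `G`, one for each
vertex `w` of `H`, with an edge of `G` between `B v` and `B w` for each edge `vw` of `H`. -/
def IsMinor (H : SimpleGraph W) (G : SimpleGraph V) : Prop :=
  ∃ B : W → Set V, (∀ w, (G.induce (B w)).Connected) ∧ Pairwise (Function.onFun Disjoint B) ∧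
    ∀ v w, H.Adj v w → ∃ x ∈ B v, ∃ y ∈ B w, G.Adj x y

lemma IsMinor.trans_isContained {G' : SimpleGraph V'} (h : IsMinor H G) (hG : G ⊑ G') :
    IsMinor H G' := by
  obtain ⟨B, conn, disj, adj⟩ := h
  obtain ⟨f⟩ := hG
  refine ⟨fun w ↦ f '' B w, fun w ↦ ?_, fun v w hvw ↦ ?_, fun v w hvw ↦ ?_⟩
  · let φ : G.induce (B w) →g G'.induce (f '' B w) :=
      ⟨fun x ↦ ⟨f x, Set.mem_image_of_mem f x.2⟩, fun h ↦ f.toHom.map_rel h⟩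
    refine (conn w).map φ ?_
    rintro ⟨_, x, hx, rfl⟩
    exact ⟨⟨x, hx⟩, rfl⟩
  · exact (Set.disjoint_image_iff f.injective).2 (disj hvw)
  · obtain ⟨x, hx, y, hy, hxy⟩ := adj v w hvw
    exact ⟨f x, Set.mem_image_of_mem f hx, f y, Set.mem_image_of_mem f hy, f.toHom.map_adj hxy⟩

lemma connected_induce_singleton (v : V) : (G.induce {v}).Connected :=
  (G.induce_singleton_eq_top v).symm ▸ connected_top

lemma IsMinor.of_isContained (h : H ⊑ G) : IsMinor H G := by
  refine IsMinor.trans_isContained ⟨fun w ↦ {w}, fun w ↦ ?_, fun v w hvw ↦ ?_, fun v w hvw ↦ ?_⟩ h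
  · exact connected_induce_singleton w
  · exact Set.disjoint_singleton.2 hvw
  · exact ⟨v, rfl, w, rfl, hvw⟩

lemma connected_induce_preimage {f : V → V'} (hf : ∀ y, (G.induce (f ⁻¹' {y})).Connected)
    {s : Set V'} (hs : ((G.map f).induce s).Connected) : (G.induce (f ⁻¹' s)).Connected := by
  have mem_of_eq {x : V} {y : s} (h : f x = y) : x ∈ f ⁻¹' s := by
    rw [Set.mem_preimage, h]
    exact y.2
  have fibre (x y : f ⁻¹' s) (hxy : f x = f y) : (G.induce (f ⁻¹' s)).Reachable x y := by
    have hsub : f ⁻¹' {f y} ⊆ f ⁻¹' s := Set.preimage_mono (Set.singleton_subset_iff.2 y.2)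
    exact ((hf (f y)).preconnected ⟨x, hxy⟩ ⟨y, rfl⟩).map (G.induceHomOfLE hsub).toHom
  obtain ⟨y₀, hy₀⟩ := (connected_iff_exists_forall_reachable _).1 hs
  obtain ⟨x₀, hx₀⟩ := (hf y₀).nonempty
  refine (connected_iff_exists_forall_reachable _).2 ⟨⟨x₀, mem_of_eq hx₀⟩, fun x ↦ ?_⟩
  suffices h : ∀ y : s, ∀ x : f ⁻¹' s, f x = y →
      (G.induce (f ⁻¹' s)).Reachable ⟨x₀, mem_of_eq hx₀⟩ x from
    h ⟨f x, x.2⟩ x rfl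
  intro y
  induction (reachable_iff_reflTransGen _ _).1 (hy₀ y) with
  | refl => exact fun x hx ↦ fibre _ _ (hx₀.trans hx.symm)
  | @tail y z _ hyz ih =>
    intro x hx
    obtain ⟨-, a, b, hab, ha, hb⟩ := hyz
    have hab' : (G.induce (f ⁻¹' s)).Adj ⟨a, mem_of_eq ha⟩ ⟨b, mem_of_eq hb⟩ := hab
    exact (ih _ ha).trans (hab'.reachable.trans (fibre _ _ (hb.trans hx.symm)))

lemma IsMinor.of_map {f : V → V'} (hf : ∀ y, (G.induce (f ⁻¹' {y})).Connected)
    (h : IsMinor H (G.map f)) : IsMinor H G := by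
  obtain ⟨B, conn, disj, adj⟩ := h
  refine ⟨fun w ↦ f ⁻¹' B w, fun w ↦ connected_induce_preimage hf (conn w),
    fun v w hvw ↦ (disj hvw).preimage f, fun v w hvw ↦ ?_⟩
  obtain ⟨_, hx, _, hy, -, x, y, hxy, rfl, rfl⟩ := adj v w hvw
  exact ⟨x, hx, y, hy, hxy⟩

end Minors

section Mader

variable {V : Type*} {G : SimpleGraph V}

open scoped Classical in
/-- The map `V → V \ {v}` that sends `v` to `u` and fixes every other vertex. The graph obtained
from `G` by contracting an edge `uv` is `G.map (mergeInto h)`. -/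
noncomputable def mergeInto {u v : V} (h : u ≠ v) (x : V) : ({v}ᶜ : Set V) :=
  if hx : x = v then ⟨u, h⟩ else ⟨x, hx⟩

lemma mergeInto_eq_iff {u v x y : V} (h : u ≠ v) :
    mergeInto h x = mergeInto h y ↔ x = y ∨ x = u ∧ y = v ∨ x = v ∧ y = u := by
  grind [mergeInto]

lemma IsMinor.of_contract {W : Type*} {H : SimpleGraph W} {u v : V} (huv : G.Adj u v)
    (h : IsMinor H (G.map (mergeInto huv.ne))) : IsMinor H G := by
  refine h.of_map fun y ↦ ?_
  by_cases hy : y = mergeInto huv.ne u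
  · have fibre : mergeInto huv.ne ⁻¹' {y} = {u, v} := by
      ext x
      simp only [hy, Set.mem_preimage, Set.mem_singleton_iff, mergeInto_eq_iff, Set.mem_insert_iff]
      grind
    rw [fibre]
    exact induce_pair_connected_of_adj huv
  · have fibre : mergeInto huv.ne ⁻¹' {y} = {(y : V)} := by
      ext x
      obtain ⟨y, hyv⟩ := y
      simp only [mergeInto, Set.mem_preimage, Set.mem_singleton_iff] at *
      grind
    rw [fibre]
    exact connected_induce_singleton _

open Finset in
lemma card_edgeFinset_le_contract_add [Fintype V] [DecidableEq V] [DecidableRel G.Adj] {u v : V}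
    (huv : G.Adj u v) [Fintype (G.map (mergeInto huv.ne)).edgeSet] :
    #G.edgeFinset ≤
      #(G.map (mergeInto huv.ne)).edgeFinset + #(G.neighborFinset u ∩ G.neighborFinset v) + 1 := by
  set lost := (insert u (G.neighborFinset u ∩ G.neighborFinset v)).image (s(v, ·))
  have card_lost : #lost ≤ #(G.neighborFinset u ∩ G.neighborFinset v) + 1 :=
    card_image_le.trans (card_insert_le _ _)
  have uv_mem : s(v, u) ∈ lost := mem_image_of_mem _ (mem_insert_self _ _)
  have mem_lost {x : V} (hu : G.Adj x u) (hv : G.Adj x v) : s(v, x) ∈ lost :=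
    mem_image_of_mem _ (mem_insert_of_mem (by simp [hu.symm, hv.symm]))
  have card_kept : #(G.edgeFinset \ lost) ≤ #(G.map (mergeInto huv.ne)).edgeFinset := by
    refine card_le_card_of_injOn (Sym2.map (mergeInto huv.ne)) ?_ ?_
    · rintro ⟨a, b⟩ he
      simp only [mem_coe, mem_sdiff, mem_edgeFinset, mem_edgeSet] at he
      have hne : mergeInto huv.ne a ≠ mergeInto huv.ne b := by
        rw [Ne, mergeInto_eq_iff]
        grind [G.irrefl]
      simpa using ⟨hne, a, b, he.1, rfl, rfl⟩
    · rintro ⟨a, b⟩ he ⟨c, d⟩ he' heq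
      simp only [mem_coe, mem_sdiff, mem_edgeFinset, mem_edgeSet] at he he'
      simp only [Sym2.map_mk, Sym2.eq_iff, mergeInto_eq_iff] at heq ⊢
      grind [Sym2.eq_swap, G.adj_comm, G.irrefl]
  have := le_card_sdiff lost G.edgeFinset
  omega

lemma IsMinor.top_of_isNClique {n : ℕ} {s : Finset V} (hs : G.IsNClique n s) {a b : V}
    (hab : G.Adj a b) (ha : a ∉ s) (hb : b ∉ s) (h : ∀ x ∈ s, G.Adj a x ∨ G.Adj b x) :
    IsMinor (completeGraph (Fin (n + 1))) G := by
  let e : Fin n ≃ s := (s.equivFinOfCardEq hs.card_eq).symm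
  have cone (i : Fin n) : ∃ x ∈ ({a, b} : Set V), G.Adj x (e i) := by
    simpa using h (e i) (e i).2
  have e_adj {i j : Fin n} (hij : i ≠ j) : G.Adj (e i) (e j) :=
    hs.isClique (e i).2 (e j).2 (by simpa [Subtype.ext_iff] using e.injective.ne hij)
  refine ⟨Fin.cons {a, b} fun i ↦ {(e i : V)}, ?_, ?_, ?_⟩
  · exact Fin.forall_fin_succ.2
      ⟨induce_pair_connected_of_adj hab, fun i ↦ connected_induce_singleton (e i : V)⟩
  · have disj (i : Fin n) : Disjoint {a, b} ({(e i : V)} : Set V) := by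
      grind [Set.disjoint_singleton_right]
    simp only [Pairwise, Function.onFun, Fin.forall_fin_succ, Fin.cons_zero, Fin.cons_succ]
    exact ⟨⟨fun h ↦ absurd rfl h, fun i _ ↦ disj i⟩, fun i ↦ ⟨fun _ ↦ (disj i).symm,
      fun j hij ↦ Set.disjoint_singleton.2 (e_adj (ne_of_apply_ne _ hij)).ne⟩⟩
  · simp only [Fin.forall_fin_succ, Fin.cons_zero, Fin.cons_succ, top_adj, Set.mem_singleton_iff,
      exists_eq_left]
    refine ⟨⟨fun h ↦ absurd rfl h, fun i _ ↦ cone i⟩, fun i ↦ ⟨fun _ ↦ ?_,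
      fun j hij ↦ e_adj (ne_of_apply_ne _ hij)⟩⟩
    obtain ⟨x, hx, hxi⟩ := cone i
    exact ⟨x, hx, hxi.symm⟩

open Finset in
lemma exists_adj_of_card_lt [DecidableEq V] [Fintype V] [DecidableRel G.Adj] {N T : Finset V}
    {u : V} (hT : T ⊆ N) (h : #N < #T + #(G.neighborFinset u ∩ N)) : ∃ z ∈ T, G.Adj u z := by
  by_contra! hnot
  have hsub : G.neighborFinset u ∩ N ⊆ N \ T := fun z hz ↦ by
    grind [mem_neighborFinset]
  have := card_le_card hsub
  have := card_sdiff_add_card_eq_card hT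
  omega

open Finset in
lemma exists_adj_isClique_sdiff [DecidableEq V] {N : Finset V} (hN : #N = 5)
    (h : ∀ u ∈ N, ∀ x ∈ N, ∀ y ∈ N, u ≠ x → u ≠ y → x ≠ y → G.Adj u x ∨ G.Adj u y) :
    ∃ a ∈ N, ∃ c ∈ N, G.Adj a c ∧ G.IsClique (N \ {a, c} : Finset V) ∧
      ∀ x ∈ N \ {a, c}, G.Adj a x ∨ G.Adj c x := by
  by_cases hN' : G.IsClique (N : Set V)
  · obtain ⟨a, ha, c, hc, hac⟩ := one_lt_card.1 (by omega : 1 < #N)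
    refine ⟨a, ha, c, hc, hN' ha hc hac, hN'.subset (by simp), fun x hx ↦ .inl (hN' ha ?_ ?_)⟩ <;>
      grind
  obtain ⟨a, ha, b, hb, hab, nab⟩ : ∃ a ∈ N, ∃ b ∈ N, a ≠ b ∧ ¬ G.Adj a b := by
    simpa [IsClique, Set.Pairwise] using hN'
  have hN₃ : #(N \ {a, b}) = 3 := by
    grind [card_sdiff_of_subset]
  by_cases hcd : G.IsClique (N \ {a, b} : Finset V)
  · obtain ⟨c, hc⟩ : (N \ {a, b}).Nonempty := card_pos.1 (by omega)
    refine ⟨a, ha, c, by grind, by grind, ?_, by grind [G.adj_comm]⟩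
    intro x hx y hy hxy
    have := @hcd x
    grind [G.adj_comm]
  obtain ⟨c, hc, d, hd, hcd', ncd⟩ : ∃ c ∈ N \ {a, b}, ∃ d ∈ N \ {a, b}, c ≠ d ∧ ¬ G.Adj c d := by
    simpa [IsClique, Set.Pairwise, and_assoc] using hcd
  have hN₁ : #(N \ {a, b, c, d}) ≤ 1 := by
    rw [card_sdiff_of_subset (by grind)]
    grind
  refine ⟨a, ha, c, by grind, by grind, ?_, by grind [G.adj_comm]⟩
  intro x hx y hy hxy
  by_contra hnot
  have mem_rest {z w : V} (hz : z ∈ N \ {a, c}) (hw : w ∈ N \ {a, c}) (hzw : z ≠ w)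
      (hnot : ¬ G.Adj z w) : z ∈ N \ {a, b, c, d} := by
    have hzb : z ≠ b := by
      rintro rfl
      have := h z hb a ha w (by grind) hab.symm hzw (by grind)
      grind [G.adj_comm]
    have hzd : z ≠ d := by
      rintro rfl
      have := h z (by grind) c (by grind) w (by grind) hcd'.symm hzw (by grind)
      grind [G.adj_comm]
    grind
  exact hxy (card_le_one.1 hN₁ x (mem_rest hx hy hxy hnot) y
    (mem_rest hy hx hxy.symm fun h ↦ hnot h.symm))

open Finset in
lemma isMinor_top_five_of_degree_le_five [Fintype V] [DecidableEq V] [DecidableRel G.Adj] {v : V}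
    (h₃ : 3 < G.degree v) (h₅ : G.degree v ≤ 5)
    (h : ∀ u ∈ G.neighborFinset v, 3 ≤ #(G.neighborFinset u ∩ G.neighborFinset v)) :
    IsMinor (completeGraph (Fin 5)) G := by
  rw [← card_neighborFinset_eq_degree] at h₃ h₅
  have adj_of_mem {x : V} (hx : x ∈ G.neighborFinset v) : G.Adj v x :=
    (G.mem_neighborFinset v x).1 hx
  obtain h₄ | h₅ : #(G.neighborFinset v) = 4 ∨ #(G.neighborFinset v) = 5 := by omega
  · have clique : G.IsNClique 4 (G.neighborFinset v) := by
      refine ⟨fun x hx y hy hxy ↦ ?_, h₄⟩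
      have := h x hx
      obtain ⟨z, hz, hxz⟩ : ∃ z ∈ ({x, y} : Finset V), G.Adj x z :=
        exists_adj_of_card_lt (N := G.neighborFinset v) (by grind) (by grind)
      grind [G.irrefl]
    have := clique.insert fun x hx ↦ adj_of_mem hx
    exact .of_isContained ((not_cliqueFree_iff_top_isContained 5).1 this.not_cliqueFree)
  · have adj_or_adj : ∀ u ∈ G.neighborFinset v, ∀ x ∈ G.neighborFinset v,
        ∀ y ∈ G.neighborFinset v, u ≠ x → u ≠ y → x ≠ y → G.Adj u x ∨ G.Adj u y := by
      intro u hu x hx y hy hux huy hxy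
      have := h u hu
      obtain ⟨z, hz, huz⟩ : ∃ z ∈ ({u, x, y} : Finset V), G.Adj u z :=
        exists_adj_of_card_lt (N := G.neighborFinset v) (by grind) (by grind)
      grind [G.irrefl]
    obtain ⟨a, ha, c, hc, hac, clique, cover⟩ := exists_adj_isClique_sdiff h₅ adj_or_adj
    have card_rest : #(G.neighborFinset v \ {a, c}) = 3 := by
      rw [card_sdiff_of_subset (by grind), h₅, card_pair hac.ne]
    have clique' : G.IsNClique 4 (insert v (G.neighborFinset v \ {a, c})) :=
      .insert ⟨clique, card_rest⟩ fun x hx ↦ adj_of_mem (mem_sdiff.1 hx).1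
    refine .top_of_isNClique clique' hac ?_ ?_ ?_
    · grind [G.irrefl]
    · grind [G.irrefl]
    · rintro x hx
      obtain rfl | hx := mem_insert.1 hx
      · exact .inl (adj_of_mem ha).symm
      · exact cover x hx

open Finset in
open scoped Classical in
lemma exists_le_card_edgeFinset_eq [Fintype V] {k : ℕ} (hk : k ≤ #G.edgeFinset) :
    ∃ G' ≤ G, #G'.edgeFinset = k := by
  obtain ⟨T, hT, card_T⟩ := exists_subset_card_eq (Nat.sub_le #G.edgeFinset k)
  refine ⟨G.deleteEdges T, deleteEdges_le _, ?_⟩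
  rw [edgeFinset_deleteEdges, card_sdiff_of_subset hT]
  omega

open Finset in
lemma exists_degree_le_five [Fintype V] [DecidableRel G.Adj]
    (h : #G.edgeFinset < 3 * Fintype.card V) : ∃ v, G.degree v ≤ 5 := by
  by_contra! hdeg
  have := card_nsmul_le_sum univ (G.degree ·) 6 fun v _ ↦ hdeg v
  rw [G.sum_degrees_eq_twice_card_edges, card_univ, smul_eq_mul] at this
  omega

open Finset in
theorem isMinor_top_five_of_le_card_edgeFinset [Fintype V] [Fintype G.edgeSet]
    (hV : 3 ≤ Fintype.card V) (hE : 3 * Fintype.card V ≤ #G.edgeFinset + 5) :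
    IsMinor (completeGraph (Fin 5)) G := by
  induction hn : Fintype.card V using Nat.strong_induction_on generalizing V with | _ n ih
  classical
  obtain ⟨G', hG', hE'⟩ : ∃ G' ≤ G, #G'.edgeFinset = 3 * n - 5 :=
    exists_le_card_edgeFinset_eq (by convert! Nat.sub_le_of_le_add (hn ▸ hE))
  refine IsMinor.trans_isContained ?_ (.of_le hG')
  clear hE hG'
  have four_le : 4 ≤ n := by
    have := G'.card_edgeFinset_le_card_choose_two
    by_contra! hlt
    obtain rfl : n = 3 := by omega
    simp [hn, hE'] at this
  have card_compl (v : V) : Fintype.card ({v}ᶜ : Set V) = n - 1 :=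
    hn ▸ Set.card_ne_eq v
  obtain ⟨v, hv⟩ := exists_degree_le_five (show #G'.edgeFinset < _ by omega)
  by_cases hv₃ : G'.degree v ≤ 3
  · refine IsMinor.trans_isContained ?_ ⟨Copy.induce G' {v}ᶜ⟩
    refine ih (n - 1) (by omega) (by rw [card_compl]; omega) ?_ (card_compl v)
    have := (G'.card_edgeFinset_induce_compl_singleton v).trans
      (G'.card_edgeFinset_deleteIncidenceSet v)
    rw [card_compl]
    omega
  by_cases hcommon : ∃ u, G'.Adj u v ∧ #(G'.neighborFinset u ∩ G'.neighborFinset v) ≤ 2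
  · obtain ⟨u, huv, hcommon⟩ := hcommon
    refine .of_contract huv (ih (n - 1) (by omega) ?_ ?_ ?_)
    · rw [card_compl]
      omega
    · have := card_edgeFinset_le_contract_add huv
      rw [card_compl]
      omega
    · exact card_compl v
  push Not at hcommon
  exact isMinor_top_five_of_degree_le_five (by omega) hv fun u hu ↦
    hcommon u ((G'.mem_neighborFinset v u).1 hu).symm

end Mader

section Topology

open Complex unitInterval

/-- The change `φ 1 - φ 0` of a continuous logarithm `φ` along a nowhere vanishing path `γ` in `ℂ`
(and `0` if `γ` has no continuous logarithm). -/
noncomputable def logChange (γ : I → ℂ) : ℂ :=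
  open scoped Classical in
  if h : ∃ φ : I → ℂ, Continuous φ ∧ ∀ t, exp (φ t) = γ t then h.choose 1 - h.choose 0 else 0

lemma sub_eq_sub_of_exp_eq_s11 {φ ψ : I → ℂ} (hφ : Continuous φ) (hψ : Continuous ψ)
    (h : ∀ t, exp (φ t) = exp (ψ t)) (s t : I) : φ s - ψ s = φ t - ψ t := by
  refine isCoveringMap_exp.const_of_comp (hφ.sub hψ) (fun s t ↦ Subtype.ext ?_) s t
  simp [exp_sub, h]

lemma logChange_eq {γ φ : I → ℂ} (hφ : Continuous φ) (h : ∀ t, exp (φ t) = γ t) :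
    logChange γ = φ 1 - φ 0 := by
  have hex : ∃ φ : I → ℂ, Continuous φ ∧ ∀ t, exp (φ t) = γ t := ⟨φ, hφ, h⟩
  obtain ⟨hψ, hψγ⟩ := hex.choose_spec
  rw [logChange, dif_pos hex]
  linear_combination sub_eq_sub_of_exp_eq_s11 hψ hφ (fun t ↦ (hψγ t).trans (h t).symm) 1 0

lemma exists_continuous_exp_eq_s11 {X Y : Type*} [TopologicalSpace X] [SimplyConnectedSpace X]
    [LocallyPathConnectedSpace X] [TopologicalSpace Y] {i : Y → X} (hi : Continuous i) {r : X → Y}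
    (hr : Continuous r) (hri : Function.LeftInverse r i) {f : Y → ℂ} (hf : Continuous f)
    (h₀ : ∀ y, f y ≠ 0) : ∃ φ : Y → ℂ, Continuous φ ∧ ∀ y, exp (φ y) = f y := by
  obtain ⟨x₀⟩ : Nonempty X := inferInstance
  obtain ⟨φ, ⟨-, hφ⟩, -⟩ := isCoveringMapOn_exp.existsUnique_continuousMap_lifts
    ⟨f ∘ r, hf.comp hr⟩ (exp_log (h₀ (r x₀))) fun x ↦ h₀ (r x)
  refine ⟨φ ∘ i, φ.continuous.comp hi, fun y ↦ (congrFun hφ (i y)).trans ?_⟩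
  exact congrArg f (hri y)

lemma exists_continuous_exp_eq_of_path {γ : I → ℂ} (hγ : Continuous γ) (h₀ : ∀ t, γ t ≠ 0) :
    ∃ φ : I → ℂ, Continuous φ ∧ ∀ t, exp (φ t) = γ t :=
  exists_continuous_exp_eq_s11 continuous_subtype_val (continuous_projIcc (h := zero_le_one))
    (Set.projIcc_val _) hγ h₀

lemma exp_logChange {γ : I → ℂ} (hγ : Continuous γ) (h₀ : ∀ t, γ t ≠ 0) :
    exp (logChange γ) = γ 1 / γ 0 := by
  obtain ⟨φ, hφ, hφγ⟩ := exists_continuous_exp_eq_of_path hγ h₀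
  rw [logChange_eq hφ hφγ, exp_sub, hφγ, hφγ]

lemma logChange_neg {γ : I → ℂ} (hγ : Continuous γ) (h₀ : ∀ t, γ t ≠ 0) :
    logChange (fun t ↦ -γ t) = logChange γ := by
  obtain ⟨φ, hφ, hφγ⟩ := exists_continuous_exp_eq_of_path hγ h₀
  rw [logChange_eq hφ hφγ, logChange_eq (φ := fun t ↦ φ t + Real.pi * Complex.I) (by fun_prop)]
  · ring
  · simp [exp_add, hφγ]

lemma logChange_square {F : I × I → ℂ} (hF : Continuous F) (h₀ : ∀ x, F x ≠ 0) :
    logChange (fun s ↦ F (s, 0)) + logChange (fun t ↦ F (1, t)) =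
      logChange (fun t ↦ F (0, t)) + logChange (fun s ↦ F (s, 1)) := by
  obtain ⟨Φ, hΦ, hΦF⟩ := exists_continuous_exp_eq_s11
    (continuous_subtype_val.prodMap continuous_subtype_val)
    (continuous_projIcc.prodMap continuous_projIcc)
    (.prodMap (Set.projIcc_val zero_le_one) (Set.projIcc_val zero_le_one)) hF h₀
  rw [logChange_eq (φ := fun s ↦ Φ (s, 0)) (by fun_prop) fun _ ↦ hΦF _,
    logChange_eq (φ := fun t ↦ Φ (1, t)) (by fun_prop) fun _ ↦ hΦF _,
    logChange_eq (φ := fun t ↦ Φ (0, t)) (by fun_prop) fun _ ↦ hΦF _,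
    logChange_eq (φ := fun s ↦ Φ (s, 1)) (by fun_prop) fun _ ↦ hΦF _]
  ring

variable {ι : Type*} {p : ι → ℂ} {γ : ∀ i j, Path (p i) (p j)} {a b c d : ι}

/-- Paths `γ i j` joining points `p i` and `p j` of the plane, any two of which are disjoint if
their four endpoints have distinct indices: an almost embedding of the complete graph on `ι`. -/
def IsAlmostEmbedding (γ : ∀ i j, Path (p i) (p j)) : Prop :=
  ∀ i j k l, [i, j, k, l].Nodup → Disjoint (Set.range (γ i j)) (Set.range (γ k l))

/-- The change along the path from `p i` to `p j` of a continuous logarithm of `z ↦ z - p k`. -/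
noncomputable def edgeChange (γ : ∀ i j, Path (p i) (p j)) (i j k : ι) : ℂ :=
  logChange fun t ↦ γ i j t - p k

/-- The sum of `edgeChange` over the sides of the triangle `i j k`, each side being seen from the
opposite vertex. It is an analogue of the angle sum. -/
noncomputable def angleSum (γ : ∀ i j, Path (p i) (p j)) (i j k : ι) : ℂ :=
  edgeChange γ i j k + edgeChange γ j k i - edgeChange γ i k j

namespace IsAlmostEmbedding

lemma ne (hγ : IsAlmostEmbedding γ) (h : [a, b, c, d].Nodup) (s t : I) : γ a b s ≠ γ c d t :=
  (hγ a b c d h).ne_of_mem (Set.mem_range_self s) (Set.mem_range_self t)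

lemma edgeChange_add (hγ : IsAlmostEmbedding γ) (h : [a, b, c, d].Nodup) :
    edgeChange γ a b c + edgeChange γ c d b = edgeChange γ c d a + edgeChange γ a b d := by
  have square := logChange_square (F := fun x ↦ γ a b x.1 - γ c d x.2) (by fun_prop)
    fun x ↦ sub_ne_zero.2 (hγ.ne h x.1 x.2)
  have reverse (s : I) :
      logChange (fun t ↦ γ a b s - γ c d t) = logChange fun t ↦ γ c d t - γ a b s := by
    simpa using logChange_neg (γ := fun t ↦ γ c d t - γ a b s) (by fun_prop)
      fun t ↦ sub_ne_zero.2 (hγ.ne h s t).symm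
  simp only [reverse] at square
  simpa only [Path.source, Path.target] using! square

lemma exp_edgeChange (hγ : IsAlmostEmbedding γ) (h : [a, b, c, d].Nodup) :
    exp (edgeChange γ a b c) = (p b - p c) / (p a - p c) := by
  have h₀ (t : I) : γ a b t - p c ≠ 0 := by
    simpa [sub_ne_zero] using hγ.ne h t 0
  rw [edgeChange, exp_logChange (by fun_prop) h₀, Path.source, Path.target]

lemma point_ne (hγ : IsAlmostEmbedding γ) (h : [a, b, c, d].Nodup) : p a - p b ≠ 0 := by
  have := hγ.ne (a := a) (b := c) (c := b) (d := d) (by grind) 0 0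
  simpa [sub_ne_zero] using this

lemma exists_angleSum_eq (hγ : IsAlmostEmbedding γ) (h : [a, b, c, d].Nodup) :
    ∃ m : ℤ, angleSum γ a b c = (2 * m + 1) * (Real.pi * Complex.I) := by
  have ab := hγ.point_ne h
  have ac := hγ.point_ne (a := a) (b := c) (c := b) (d := d) (by grind)
  have bc := hγ.point_ne (a := b) (b := c) (c := a) (d := d) (by grind)
  have hexp : exp (angleSum γ a b c) = exp (Real.pi * Complex.I) := by
    rw [angleSum, exp_sub, exp_add, hγ.exp_edgeChange h,
      hγ.exp_edgeChange (a := b) (b := c) (c := a) (d := d) (by grind),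
      hγ.exp_edgeChange (a := a) (b := c) (c := b) (d := d) (by grind), exp_pi_mul_I,
      ← neg_sub (p a) (p b), ← neg_sub (p a) (p c), ← neg_sub (p b) (p c)]
    field
  obtain ⟨m, hm⟩ := exp_eq_exp_iff_exists_int.1 hexp
  exact ⟨m, by linear_combination hm⟩

lemma exists_tetrahedron_eq (hγ : IsAlmostEmbedding γ) (h : [a, b, c, d].Nodup) :
    ∃ m : ℤ, angleSum γ a b c - angleSum γ a b d + angleSum γ a c d - angleSum γ b c d =
      (2 * m + 1) * (2 * Real.pi * Complex.I) := by
  have ab := hγ.point_ne h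
  have ac := hγ.point_ne (a := a) (b := c) (c := b) (d := d) (by grind)
  have ad := hγ.point_ne (a := a) (b := d) (c := b) (d := c) (by grind)
  have hexp : exp (edgeChange γ c d a - edgeChange γ b d a + edgeChange γ b c a) = 1 := by
    rw [exp_add, exp_sub, hγ.exp_edgeChange (a := c) (b := d) (c := a) (d := b) (by grind),
      hγ.exp_edgeChange (a := b) (b := d) (c := a) (d := c) (by grind),
      hγ.exp_edgeChange (a := b) (b := c) (c := a) (d := d) (by grind),
      ← neg_sub (p a) (p b), ← neg_sub (p a) (p c), ← neg_sub (p a) (p d)]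
    field
  obtain ⟨m, hm⟩ := exp_eq_one_iff.1 hexp
  obtain ⟨n, hn⟩ := hγ.exists_angleSum_eq (a := b) (b := c) (c := d) (d := a) (by grind)
  have abcd := hγ.edgeChange_add h
  have acbd := hγ.edgeChange_add (a := a) (b := c) (c := b) (d := d) (by grind)
  have adbc := hγ.edgeChange_add (a := a) (b := d) (c := b) (d := c) (by grind)
  refine ⟨m - n - 1, ?_⟩
  push_cast
  rw [angleSum] at hn
  simp only [angleSum]
  linear_combination abcd - acbd + adbc + 2 * hm - 2 * hn

end IsAlmostEmbedding

theorem not_isAlmostEmbedding {p : Fin 5 → ℂ} (γ : ∀ i j, Path (p i) (p j)) :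
    ¬ IsAlmostEmbedding γ := by
  intro hγ
  obtain ⟨m₀, h₀⟩ := hγ.exists_tetrahedron_eq (a := 1) (b := 2) (c := 3) (d := 4) (by decide)
  obtain ⟨m₁, h₁⟩ := hγ.exists_tetrahedron_eq (a := 0) (b := 2) (c := 3) (d := 4) (by decide)
  obtain ⟨m₂, h₂⟩ := hγ.exists_tetrahedron_eq (a := 0) (b := 1) (c := 3) (d := 4) (by decide)
  obtain ⟨m₃, h₃⟩ := hγ.exists_tetrahedron_eq (a := 0) (b := 1) (c := 2) (d := 4) (by decide)
  obtain ⟨m₄, h₄⟩ := hγ.exists_tetrahedron_eq (a := 0) (b := 1) (c := 2) (d := 3) (by decide)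
  have hsum : ((2 * (m₀ - m₁ + m₂ - m₃ + m₄) + 1 : ℤ) : ℂ) * (2 * Real.pi * Complex.I) = 0 := by
    push_cast
    linear_combination -h₀ + h₁ - h₂ + h₃ - h₄
  have := Int.cast_eq_zero.1 ((mul_eq_zero.1 hsum).resolve_right two_pi_I_ne_zero)
  omega

end Topology

section Planarity

open unitInterval

variable {V : Type*} {G : SimpleGraph V}

lemma IsPlanar.exists_region (hG : IsPlanar G) :
    ∃ (f : V → ℝ × ℝ) (X : Set V → Set (ℝ × ℝ)), (∀ W, ∀ v ∈ W, f v ∈ X W) ∧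
      (∀ W, ∀ u ∈ W, ∀ v ∈ W, G.Adj u v → JoinedIn (X W) (f u) (f v)) ∧
      ∀ W W', Disjoint W W' → Disjoint (X W) (X W') := by
  obtain ⟨f, γ, f_inj, γ_cont, γ_ends, -, γ_interior, γ_cross⟩ := hG
  have mem_of_eq {e : G.edgeSet} {t : I} {v : V} (h : γ e t = f v) : v ∈ (e : Sym2 V) := by
    obtain ⟨a, b, hab, ha, hb⟩ := γ_ends e
    rw [hab, Sym2.mem_iff]
    by_cases t₀ : (t : ℝ) = 0
    · exact .inl (f_inj (h.symm.trans (congrArg (γ e) (Subtype.ext t₀) |>.trans ha)))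
    by_cases t₁ : (t : ℝ) = 1
    · exact .inr (f_inj (h.symm.trans (congrArg (γ e) (Subtype.ext t₁) |>.trans hb)))
    · exact absurd h (γ_interior e t t₀ t₁ v)
  have ends_inter {e e' : G.edgeSet} {s t : I} (h : γ e s = γ e' t) :
      ∃ v, v ∈ (e : Sym2 V) ∧ v ∈ (e' : Sym2 V) := by
    by_cases he : e = e'
    · exact ⟨(e : Sym2 V).out.1, Sym2.out_fst_mem _, he ▸ Sym2.out_fst_mem _⟩
    · obtain ⟨v, hv⟩ := γ_cross e e' he s t h
      exact ⟨v, mem_of_eq hv.symm, mem_of_eq (h ▸ hv.symm)⟩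
  let X (W : Set V) : Set (ℝ × ℝ) :=
    {z | (∃ v ∈ W, f v = z) ∨ ∃ (e : G.edgeSet) (t : I), (∀ v ∈ (e : Sym2 V), v ∈ W) ∧ γ e t = z}
  refine ⟨f, X, fun W v hv ↦ .inl ⟨v, hv, rfl⟩, fun W u hu v hv huv ↦ ?_, fun W W' hW ↦ ?_⟩
  · obtain ⟨a, b, hab, ha, hb⟩ := γ_ends ⟨s(u, v), huv⟩
    have joined : JoinedIn (X W) (f a) (f b) := ⟨⟨⟨γ ⟨s(u, v), huv⟩, γ_cont _⟩, ha, hb⟩,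
      fun t ↦ Or.inr ⟨_, t, Sym2.ball.2 ⟨hu, hv⟩, rfl⟩⟩
    obtain ⟨rfl, rfl⟩ | ⟨rfl, rfl⟩ := Sym2.eq_iff.1 hab
    exacts [joined, joined.symm]
  · rw [Set.disjoint_left] at hW ⊢
    rintro z (⟨v, hv, rfl⟩ | ⟨e, s, he, rfl⟩) (⟨v', hv', h⟩ | ⟨e', t, he', h⟩)
    · exact hW hv (f_inj h ▸ hv')
    · exact hW hv (he' v (mem_of_eq h))
    · exact hW (he v' (mem_of_eq h.symm)) hv'
    · obtain ⟨v, hv, hv'⟩ := ends_inter h.symm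
      exact hW (he v hv) (he' v hv')

lemma joinedIn_of_reachable {X : Type*} [TopologicalSpace X] {S : Set X} {f : V → X}
    (hf : ∀ v, f v ∈ S) (h : ∀ u v, G.Adj u v → JoinedIn S (f u) (f v)) {u v : V}
    (huv : G.Reachable u v) : JoinedIn S (f u) (f v) := by
  induction (reachable_iff_reflTransGen _ _).1 huv with
  | refl => exact .refl (hf u)
  | tail _ hbc ih => exact (ih ((reachable_iff_reflTransGen _ _).2 ‹_›)).trans (h _ _ hbc)

theorem IsPlanar.not_isMinor_top_five (hG : IsPlanar G) :
    ¬ IsMinor (completeGraph (Fin 5)) G := by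
  rintro ⟨B, conn, disj, adj⟩
  obtain ⟨f, X, f_mem, joined, X_disj⟩ := hG.exists_region
  have conn_union (i j : Fin 5) : (G.induce (B i ∪ B j)).Connected := by
    obtain rfl | hij := eq_or_ne i j
    · rw [Set.union_self]
      exact conn i
    · obtain ⟨x, hx, y, hy, hxy⟩ := adj i j hij
      exact connected_induce_union (conn i).preconnected (conn j).preconnected hx hy hxy
  let r (i : Fin 5) : B i := (conn i).nonempty.some
  have joined_union (i j : Fin 5) : JoinedIn (X (B i ∪ B j)) (f (r i)) (f (r j)) :=
    joinedIn_of_reachable (f := fun v : ↥(B i ∪ B j) ↦ f v) (fun v ↦ f_mem _ v v.2)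
      (fun u v huv ↦ joined _ u u.2 v v.2 huv)
      ((conn_union i j).preconnected ⟨r i, .inl (r i).2⟩ ⟨r j, .inr (r j).2⟩)
  let φ := Complex.equivRealProdCLM.symm
  refine not_isAlmostEmbedding (fun i j ↦ (joined_union i j).somePath.map φ.continuous) ?_
  intro i j k l hijkl
  have hB : Disjoint (B i ∪ B j) (B k ∪ B l) := by
    simp only [Set.disjoint_union_left, Set.disjoint_union_right]
    refine ⟨⟨disj ?_, disj ?_⟩, disj ?_, disj ?_⟩ <;> grind
  simp only [Path.map_coe, Set.range_comp]
  refine Set.disjoint_image_of_injective φ.injective ((X_disj _ _ hB).mono ?_ ?_) <;>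
    exact Set.range_subset_iff.2 (joined_union _ _).somePath_mem

open Finset in
theorem IsPlanar.card_edgeFinset_le [Fintype V] [Fintype G.edgeSet] (hG : IsPlanar G)
    (hV : 3 ≤ Fintype.card V) : #G.edgeFinset ≤ 3 * Fintype.card V - 6 := by
  by_contra! hlt
  exact hG.not_isMinor_top_five (isMinor_top_five_of_le_card_edgeFinset hV (by omega))

end Planarity

section StraightLineDrawings

open AffineMap

variable {V R : Type*} {G : SimpleGraph V}

/-- Twice the signed area of the triangle `a b c`, which is positive if the triangle is positively
oriented and vanishes if its vertices are collinear. -/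
def orient [Ring R] (a b c : R × R) : R :=
  (b.1 - a.1) * (c.2 - a.2) - (b.2 - a.2) * (c.1 - a.1)

lemma orient_intCast [Ring R] (a b c : ℤ × ℤ) :
    (orient (a.1, a.2) (b.1, b.2) (c.1, c.2) : R) = orient a b c := by
  simp [orient]

lemma orient_lineMap [CommRing R] (a b c d : R × R) (t : R) :
    orient a b (lineMap c d t) = lineMap (orient a b c) (orient a b d) t := by
  simp only [orient, lineMap_apply, vsub_eq_sub, vadd_eq_add, smul_eq_mul, Prod.fst_add,
    Prod.snd_add, Prod.smul_fst, Prod.smul_snd, Prod.fst_sub, Prod.snd_sub]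
  ring

lemma orient_self_right [Ring R] (a b : R × R) : orient a b a = 0 := by
  simp [orient]

lemma orient_lineMap_self [CommRing R] (a b : R × R) (t : R) : orient a b (lineMap a b t) = 0 := by
  rw [orient_lineMap]
  simp [orient, mul_comm]

lemma lineMap_ne_of_orient_mul_pos {a b c d : ℝ × ℝ} (h : 0 < orient a b c * orient a b d)
    (s : ℝ) {t : ℝ} (ht : t ∈ Set.Icc (0 : ℝ) 1) : (lineMap a b s : ℝ × ℝ) ≠ lineMap c d t := by
  intro heq
  have hzero : lineMap (orient a b c) (orient a b d) t = 0 := by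
    rw [← orient_lineMap, ← heq, orient_lineMap_self]
  obtain ⟨hc, hd⟩ | ⟨hc, hd⟩ := pos_and_pos_or_neg_and_neg_of_mul_pos h
  · exact (Convex.lineMap_mem (convex_Ioi (0 : ℝ)) hc hd ht).ne' hzero
  · exact (Convex.lineMap_mem (convex_Iio (0 : ℝ)) hc hd ht).ne hzero

lemma eq_left_of_lineMap_eq_lineMap {a b d : ℝ × ℝ} (h : orient a b d ≠ 0) {s t : ℝ}
    (hst : (lineMap a b s : ℝ × ℝ) = lineMap a d t) : (lineMap a b s : ℝ × ℝ) = a := by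
  have hzero : lineMap (orient a b a) (orient a b d) t = 0 := by
    rw [← orient_lineMap, ← hst, orient_lineMap_self]
  have ht : t = 0 := by simpa [orient_self_right, lineMap_apply, h] using hzero
  rw [hst, ht, lineMap_apply_zero]

/-- Placing each vertex `v` at `P v` and drawing the edges as segments gives a plane drawing: no
vertex is collinear with an edge not containing it, and of two disjoint edges, one has both its
endpoints strictly on the same side of the line through the other. -/
structure IsStraightLineDrawing [Ring R] [LT R] (G : SimpleGraph V) (P : V → R × R) : Prop where
  injective : Function.Injective P
  orient_ne_zero : ∀ u v, G.Adj u v → ∀ w, w ≠ u → w ≠ v → orient (P u) (P v) (P w) ≠ 0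
  same_side : ∀ a b, G.Adj a b → ∀ c d, G.Adj c d → [a, b, c, d].Nodup →
    0 < orient (P a) (P b) (P c) * orient (P a) (P b) (P d) ∨
      0 < orient (P c) (P d) (P a) * orient (P c) (P d) (P b)

namespace IsStraightLineDrawing

lemma intCast {P : V → ℤ × ℤ} (hP : IsStraightLineDrawing G P) :
    IsStraightLineDrawing G (fun v ↦ ((P v).1, (P v).2) : V → ℝ × ℝ) where
  injective u v huv := hP.injective <| by simpa [Prod.ext_iff] using huv
  orient_ne_zero u v huv w hwu hwv := by
    simpa only [orient_intCast, Int.cast_ne_zero] using hP.orient_ne_zero u v huv w hwu hwv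
  same_side a b hab c d hcd hnodup := by
    simpa only [orient_intCast, ← Int.cast_mul, Int.cast_pos] using
      hP.same_side a b hab c d hcd hnodup

variable {P : V → ℝ × ℝ}

lemma lineMap_mem_range (hP : IsStraightLineDrawing G P) {a b c d : V} {s t : ℝ}
    (hs : s ∈ Set.Icc (0 : ℝ) 1) (ht : t ∈ Set.Icc (0 : ℝ) 1) (hab : G.Adj a b) (hcd : G.Adj c d)
    (hne : s(a, b) ≠ s(c, d)) (hst : (lineMap (P a) (P b) s : ℝ × ℝ) = lineMap (P c) (P d) t) :
    (lineMap (P a) (P b) s : ℝ × ℝ) ∈ Set.range P := by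
  have meet_left {a b d : V} {s t : ℝ} (hab : G.Adj a b) (had : d ≠ a) (hbd : d ≠ b)
      (hst : (lineMap (P a) (P b) s : ℝ × ℝ) = lineMap (P a) (P d) t) :
      (lineMap (P a) (P b) s : ℝ × ℝ) ∈ Set.range P :=
    ⟨a, (eq_left_of_lineMap_eq_lineMap (hP.orient_ne_zero a b hab d had hbd) hst).symm⟩
  have flip (u v : V) (t : ℝ) : (lineMap (P u) (P v) t : ℝ × ℝ) = lineMap (P v) (P u) (1 - t) :=
    (lineMap_apply_one_sub ..).symm
  by_cases hac : a = c
  · subst hac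
    exact meet_left hab hcd.ne' (by grind) hst
  by_cases had : a = d
  · subst had
    exact meet_left hab hcd.ne (by grind) (hst.trans (flip ..))
  rw [flip a b] at hst ⊢
  by_cases hbc : b = c
  · subst hbc
    exact meet_left hab.symm hcd.ne' (Ne.symm had) hst
  by_cases hbd : b = d
  · subst hbd
    exact meet_left hab.symm hcd.ne (Ne.symm hac) (hst.trans (flip ..))
  rw [← flip] at hst
  have hnodup : [a, b, c, d].Nodup := by simp [hab.ne, hcd.ne, hac, had, hbc, hbd]
  obtain h | h := hP.same_side a b hab c d hcd hnodup
  · exact (lineMap_ne_of_orient_mul_pos h s ht hst).elim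
  · exact (lineMap_ne_of_orient_mul_pos h t hs hst.symm).elim

theorem isPlanar (hP : IsStraightLineDrawing G P) : IsPlanar G := by
  have ends (e : G.edgeSet) : ∃ u v, G.Adj u v ∧ (e : Sym2 V) = s(u, v) := by
    obtain ⟨⟨u, v⟩, he⟩ := e
    exact ⟨u, v, he, rfl⟩
  choose u v adj he using ends
  have inj (e : G.edgeSet) : Function.Injective (lineMap (P (u e)) (P (v e)) : ℝ → ℝ × ℝ) :=
    lineMap_injective ℝ (hP.injective.ne (adj e).ne)
  refine ⟨P, fun e t ↦ lineMap (P (u e)) (P (v e)) (t : ℝ), hP.injective, fun e ↦ ?_,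
    fun e ↦ ⟨u e, v e, he e, lineMap_apply_zero .., lineMap_apply_one ..⟩,
    fun e ↦ (inj e).comp Subtype.val_injective, fun e t ht₀ ht₁ w hw ↦ ?_,
    fun e e' hee' s t hst ↦ ?_⟩
  · exact lineMap_continuous.comp continuous_subtype_val
  · refine hP.orient_ne_zero (u e) (v e) (adj e) w ?_ ?_ (hw ▸ orient_lineMap_self ..)
    · rintro rfl
      exact ht₀ (inj e (hw.trans (lineMap_apply_zero ..).symm))
    · rintro rfl
      exact ht₁ (inj e (hw.trans (lineMap_apply_one ..).symm))
  · refine hP.lineMap_mem_range s.2 t.2 (adj e) (adj e') ?_ hst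
    rw [← he, ← he]
    exact fun h ↦ hee' (Subtype.ext h)

end IsStraightLineDrawing

end StraightLineDrawings

section Thickness

variable {V W : Type*} {G : SimpleGraph V} {H : SimpleGraph W}

lemma IsPlanar.of_iso (hG : IsPlanar G) (e : G ≃g H) : IsPlanar H := by
  obtain ⟨f, γ, f_inj, γ_cont, γ_ends, γ_inj, γ_interior, γ_cross⟩ := hG
  refine ⟨f ∘ e.symm, γ ∘ e.symm.mapEdgeSet, f_inj.comp e.symm.injective, fun _ ↦ γ_cont _,
    fun x ↦ ?_, fun _ ↦ γ_inj _, fun _ t h₀ h₁ _ ↦ γ_interior _ t h₀ h₁ _,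
    fun x y hxy s t hst ↦ ?_⟩
  · obtain ⟨u, v, huv, hu, hv⟩ := γ_ends (e.symm.mapEdgeSet x)
    refine ⟨e u, e v, ?_, by simpa using hu, by simpa using hv⟩
    have hx : Sym2.map e (Sym2.map e.symm x) = x := by simp [Sym2.map_map]
    rw [← hx]
    exact congrArg (Sym2.map e) huv
  · rw [e.symm.surjective.range_comp]
    exact γ_cross _ _ (e.symm.mapEdgeSet.injective.ne hxy) s t hst

lemma exists_isPlanar_iSup_eq_of_iso (e : G ≃g H) {ι : Type*} {F : ι → SimpleGraph V}
    (hF : ∀ i, IsPlanar (F i)) (hG : ⨆ i, F i = G) :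
    ∃ F' : ι → SimpleGraph W, (∀ i, F' i ≤ H) ∧ (∀ i, IsPlanar (F' i)) ∧ ⨆ i, F' i = H := by
  subst hG
  let F' (i : ι) : SimpleGraph W := (F i).comap e.symm
  have cover : ⨆ i, F' i = H := by
    ext u v
    rw [← e.symm.map_adj_iff]
    simp [F']
  exact ⟨F', fun i ↦ (le_iSup F' i).trans_eq cover,
    fun i ↦ (hF i).of_iso (Iso.comap e.symm.toEquiv (F i)).symm, cover⟩

lemma thickness_congr (e : G ≃g H) : thickness G = thickness H := by
  refine congrArg sInf (Set.ext fun n ↦ ⟨?_, ?_⟩)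
  · rintro ⟨F, -, planar, cover⟩
    exact exists_isPlanar_iSup_eq_of_iso e planar cover
  · rintro ⟨F, -, planar, cover⟩
    exact exists_isPlanar_iSup_eq_of_iso e.symm planar cover

open Finset in
lemma card_edgeFinset_le_of_iSup_eq [Fintype V] [Fintype G.edgeSet] (hV : 3 ≤ Fintype.card V)
    {ι : Type*} [Fintype ι] {F : ι → SimpleGraph V} (hF : ∀ i, IsPlanar (F i))
    (hG : ⨆ i, F i = G) : #G.edgeFinset ≤ Fintype.card ι * (3 * Fintype.card V - 6) := by
  classical
  have hcover : G.edgeFinset ⊆ univ.biUnion fun i ↦ (F i).edgeFinset := by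
    intro e he
    induction e with | _ u v
    simpa [← hG] using he
  exact (card_le_card hcover).trans
    (card_biUnion_le_card_mul univ _ _ fun i _ ↦ (hF i).card_edgeFinset_le hV)

/-- If the parts of a complete multipartite graph are in bijection with the fibres of `part`, the
graph is isomorphic to the one joining the elements of different fibres. -/
noncomputable def completeMultipartiteGraphIsoComap {ι X : Type*} {V : ι → Type*} (part : X → ι)
    (e : ∀ i, V i ≃ {x // part x = i}) :
    completeMultipartiteGraph V ≃g (⊤ : SimpleGraph ι).comap part where
  toEquiv := (Equiv.sigmaCongrRight e).trans (Equiv.sigmaFiberEquiv part)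
  map_rel_iff' {x y} := by
    simp [(e x.1 x.2).2, (e y.1 y.2).2]

end Thickness

section Decomposition

/-- The part of each vertex of `tripartite`. -/
def part (v : Fin 21) : Fin 3 :=
  if v = 0 then 0 else if v ≤ 10 then 1 else 2

/-- A model of `K_{1,10,10}` on `Fin 21`, with parts `{0}`, `{1, …, 10}` and `{11, …, 20}`. -/
abbrev tripartite : SimpleGraph (Fin 21) :=
  (⊤ : SimpleGraph (Fin 3)).comap part

/-- `tripartite` is a relabelling of `K_{1,10,10}`. -/
noncomputable def isoTripartite :
    completeMultipartiteGraph ![Fin 1, Fin 10, Fin 10] ≃g tripartite :=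
  completeMultipartiteGraphIsoComap part fun
    | 0 => Fintype.equivOfCardEq (α := Fin 1) (by decide)
    | 1 => Fintype.equivOfCardEq (α := Fin 10) (by decide)
    | 2 => Fintype.equivOfCardEq (α := Fin 10) (by decide)

open Finset in
lemma card_edgeFinset_tripartite : #tripartite.edgeFinset = 120 := by
  have degrees : ∑ v, tripartite.degree v = 240 := by decide +kernel
  have := tripartite.sum_degrees_eq_twice_card_edges
  omega

/-- The neighbours `v` of `u < v` in each of the three planar layers covering `tripartite`
(there are none if `u > 10`). -/
def layerNeighbors (i : Fin 3) (u : Fin 21) : List (Fin 21) :=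
  ((![
    [[1, 3, 7, 13, 18, 19], [11, 13, 17, 18, 19], [17, 19], [13, 17, 19], [11, 18],
     [12, 13, 14, 16, 18, 20], [12, 14], [12, 13, 14, 16, 18, 20], [14, 16], [11, 15, 18],
     [11, 13, 18]],
    [[2, 4, 5, 6, 8, 11, 12, 15, 16, 17, 20], [12, 16], [11, 12, 14, 18, 20],
     [11, 12, 14, 16, 18], [12, 13, 15, 16, 17, 19], [15, 17], [15], [15, 17], [12, 20],
     [13, 16, 17, 19], [16, 19]],
    [[9, 10, 14], [14, 15, 20], [13, 15, 16], [15, 20], [14, 20], [11, 19],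
     [11, 13, 16, 17, 18, 19, 20], [11, 19], [11, 13, 15, 17, 18, 19], [12, 14, 20],
     [12, 14, 15, 17, 20]]] : Fin 3 → List (List (Fin 21))) i).getD u []

/-- The layers of a decomposition of `tripartite` into three planar graphs. -/
abbrev layer (i : Fin 3) : SimpleGraph (Fin 21) :=
  fromRel fun u v ↦ v ∈ layerNeighbors i u

/-- The vertex positions of a straight-line drawing of each layer. -/
def layerCoords : Fin 3 → Fin 21 → ℤ × ℤ :=
  ![
    ![(49, 9), (5, 4), (21, 9), (22, 13), (47, 27), (7, 63), (17, 34), (43, 21), (14, 44),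
      (58, 16), (4, 71), (70, 5), (10, 28), (8, 20), (10, 42), (51, 22), (11, 50), (16, 8),
      (59, 8), (26, 7), (12, 55)],
    ![(8, 8), (60, 34), (3, 3), (58, 40), (75, 10), (17, 18), (19, 13), (37, 20), (44, 4),
      (30, 35), (29, 53), (6, 87), (94, 3), (45, 33), (3, 94), (50, 10), (13, 77), (19, 33),
      (4, 91), (41, 40), (7, 4)],
    ![(31, 21), (15, 40), (4, 10), (21, 37), (20, 35), (18, 11), (32, 4), (14, 14), (7, 26),
      (23, 31), (9, 31), (15, 20), (36, 18), (7, 6), (19, 29), (4, 52), (5, 5), (44, 4), (9, 8),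
      (11, 10), (53, 3)]]

lemma iSup_layer : ⨆ i, layer i = tripartite := by
  have adj_iff : ∀ u v, (∃ i, (layer i).Adj u v) ↔ tripartite.Adj u v := by decide +kernel
  ext u v
  rw [iSup_adj, adj_iff]

lemma isStraightLineDrawing_layer (i : Fin 3) :
    IsStraightLineDrawing (layer i) (layerCoords i) := by
  constructor <;> revert i <;> decide +kernel

end Decomposition

theorem thickness_K1_10_10 :
    thickness (completeMultipartiteGraph ![Fin 1, Fin 10, Fin 10]) = 3 := by
  rw [thickness_congr isoTripartite]
  have three_layers : ∃ F : Fin 3 → SimpleGraph (Fin 21),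
      (∀ i, F i ≤ tripartite) ∧ (∀ i, IsPlanar (F i)) ∧ ⨆ i, F i = tripartite :=
    ⟨layer, fun i ↦ (le_iSup layer i).trans_eq iSup_layer,
      fun i ↦ (isStraightLineDrawing_layer i).intCast.isPlanar, iSup_layer⟩
  refine le_antisymm (Nat.sInf_le three_layers) (le_csInf ⟨3, three_layers⟩ ?_)
  rintro n ⟨F, -, planar, cover⟩
  have edge_bound := card_edgeFinset_le_of_iSup_eq (by simp) planar cover
  rw [card_edgeFinset_tripartite, Fintype.card_fin, Fintype.card_fin] at edge_bound
  omega
end
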